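/- For all positive integers m and n, the generating function for symmetric plane partitions P contained in the box B(n,n,m) is given by: ∑_P q^{|P|} = ∏_{i=1}^n (1 − q^{m+2i−1})/(1 − q^{2i−1}) · ∏_{1 ≤ i < j ≤ n} (1 − q^{2(m+i+j−1)})/(1 − q^{2(i+j−1)}), as an identity in the formal power series ring ℚ[[q]], where each (1 − q^a)^{−1} denotes the inverse of the unit 1 − q^a. (MacMahon's conjecture.) -/

import Mathlib

open scoped Classical

/-- A plane partition: a finite set of lattice points with positive integer coordinates
that is downward closed. -/
def IsPlanePartition (P : Finset (ℕ × ℕ × ℕ)) : Prop :=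
  (∀ p ∈ P, 1 ≤ p.1 ∧ 1 ≤ p.2.1 ∧ 1 ≤ p.2.2) ∧
    ∀ p ∈ P, ∀ i j k : ℕ,
      1 ≤ i → i ≤ p.1 → 1 ≤ j → j ≤ p.2.1 → 1 ≤ k → k ≤ p.2.2 → (i, j, k) ∈ P

/-- A plane partition is symmetric if it is invariant under transposing the first two
coordinates. -/
def IsSymmetricPP (P : Finset (ℕ × ℕ × ℕ)) : Prop :=
  ∀ i j k : ℕ, (i, j, k) ∈ P ↔ (j, i, k) ∈ P

/-- The box `B(n₁,n₂,m) = {(i,j,k) : 1 ≤ i ≤ n₁, 1 ≤ j ≤ n₂, 1 ≤ k ≤ m}` as a finset. -/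
def ppBox (n₁ n₂ m : ℕ) : Finset (ℕ × ℕ × ℕ) :=
  Finset.Icc 1 n₁ ×ˢ Finset.Icc 1 n₂ ×ˢ Finset.Icc 1 m

/-!
Column heights turn symmetric plane partitions into symmetric monotone arrays. Peeling off the
main diagonal of such an array is the branching rule for Schur functions at geometric
progressions, so the arrays with diagonal `λ` are counted by the Schur function of `λ` at
`(q, q ^ 3, …, q ^ (2 * n - 1))`, a quotient of two alternants. Macdonald's bounded form of
Littlewood's identity sums these Schur functions over all `λ` in a box, and the answer is a
determinant of type `B`. At these odd powers it becomes a Vandermonde determinant, and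
its factors give MacMahon's product.
-/

section Alternant

variable {R : Type*} [CommRing R] {n : ℕ}

/-- The alternant `det (t_j ^ (l_i + i))`. For weakly increasing `l` it is the Vandermonde
determinant of `t` times the Schur polynomial of the partition with parts `l`. -/
def alternant (t : Fin n → R) (l : Fin n → ℕ) : R :=
  (Matrix.of fun i j : Fin n => t j ^ (l i + i : ℕ)).det

lemma alternant_zero (t : Fin n → R) :
    alternant t 0 = ∏ i, ∏ j ∈ Finset.Ioi i, (t j - t i) := by
  rw [alternant, ← Matrix.det_vandermonde, ← Matrix.det_transpose]
  congr 1
  ext i j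
  simp [Matrix.vandermonde_apply]

lemma alternant_const_mul (c : R) (t : Fin n → R) (l : Fin n → ℕ) :
    alternant (fun j => c * t j) l = c ^ (∑ i, (l i + i : ℕ)) * alternant t l := by
  simp only [alternant, mul_pow]
  rw [← Finset.prod_pow_eq_pow_sum, ← Matrix.det_mul_column]
  rfl

lemma alternant_add_one (t : Fin n → R) (l : Fin n → ℕ) :
    alternant t (l + 1) = (∏ j, t j) * alternant t l := by
  rw [alternant, alternant, ← Matrix.det_mul_row]
  congr 1
  ext i j
  simp only [Matrix.of_apply, Pi.add_apply, Pi.one_apply]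
  ring

/-- The determinant with first row `v` and remaining rows `w`, as a linear form in `v`. -/
def detCons (w : Fin n → Fin (n + 1) → R) : (Fin (n + 1) → R) →ₗ[R] R where
  toFun v := (Matrix.of (Matrix.vecCons v w)).det
  map_add' v v' := (Matrix.detRowAlternating (R := R)).map_vecCons_add w v v'
  map_smul' c v := (Matrix.detRowAlternating (R := R)).map_vecCons_smul w c v

lemma detCons_apply (w : Fin n → Fin (n + 1) → R) (v : Fin (n + 1) → R) :
    detCons w v = (Matrix.of (Matrix.vecCons v w)).det :=
  rfl

lemma detCons_eq_sum (w : Fin n → Fin (n + 1) → R) (v : Fin (n + 1) → R) :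
    detCons w v =
      ∑ j : Fin (n + 1), (-1) ^ (j : ℕ) * v j * (Matrix.of fun i => j.removeNth (w i)).det := by
  rw [detCons_apply, Matrix.det_succ_row_zero]
  rfl

lemma detCons_mul_row (c : Fin (n + 1) → R) (w : Fin n → Fin (n + 1) → R) (v : Fin (n + 1) → R) :
    detCons (fun i => c * w i) (c * v) = (∏ j, c j) * detCons w v := by
  rw [detCons_apply, detCons_apply, ← Matrix.det_mul_row]
  congr 1
  ext i j
  cases i using Fin.cases <;> rfl

lemma alternant_cons_zero (t : Fin (n + 1) → R) (l : Fin n → ℕ) :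
    alternant t (Fin.cons 0 l) =
      ∑ j : Fin (n + 1), (-1) ^ (j : ℕ) * (∏ i, j.removeNth t i) * alternant (j.removeNth t) l := by
  have key : alternant t (Fin.cons 0 l) =
      detCons (fun i j => t j ^ (l i + 1 + i : ℕ)) fun _ => 1 := by
    rw [detCons_apply, alternant]
    congr 1
    ext i j
    cases i using Fin.cases with
    | zero => simp
    | succ i => simp [add_right_comm, add_assoc]
  rw [key, detCons_eq_sum]
  refine Finset.sum_congr rfl fun j _ => ?_
  rw [mul_one, mul_assoc, ← alternant_add_one]
  rfl

end Alternant

section MonotoneTuples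

/-- The weakly increasing `n`-tuples of natural numbers less than `b`. -/
noncomputable def monotoneTuples (n b : ℕ) : Finset (Fin n → ℕ) :=
  (Fintype.piFinset fun _ => Finset.range b).filter Monotone

variable {n b : ℕ}

lemma mem_monotoneTuples {l : Fin n → ℕ} :
    l ∈ monotoneTuples n b ↔ (∀ i, l i < b) ∧ Monotone l := by
  simp [monotoneTuples]

lemma add_one_mem_monotoneTuples {l : Fin n → ℕ} :
    l + 1 ∈ monotoneTuples n (b + 1) ↔ l ∈ monotoneTuples n b := by
  simp [mem_monotoneTuples, Monotone]

lemma cons_zero_mem_monotoneTuples {l : Fin n → ℕ} :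
    (Fin.cons 0 l : Fin (n + 1) → ℕ) ∈ monotoneTuples (n + 1) (b + 1) ↔
      l ∈ monotoneTuples n (b + 1) := by
  simp [mem_monotoneTuples, Monotone, Fin.forall_fin_succ]

lemma sum_monotoneTuples_succ {M : Type*} [AddCommMonoid M] (n b : ℕ)
    (f : (Fin (n + 1) → ℕ) → M) :
    ∑ l ∈ monotoneTuples (n + 1) (b + 1), f l =
      ∑ l ∈ monotoneTuples (n + 1) b, f (l + 1) +
        ∑ l ∈ monotoneTuples n (b + 1), f (Fin.cons 0 l) := by
  rw [← Finset.sum_filter_not_add_sum_filter _ fun l => l 0 = 0]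
  congr 1
  · refine (Finset.sum_nbij (· + 1) (fun l hl => ?_) (add_left_injective 1).injOn
      (fun l hl => ?_) fun l _ => rfl).symm
    · simpa using add_one_mem_monotoneTuples.2 hl
    · obtain ⟨hl, h0⟩ := Finset.mem_filter.1 hl
      have hpos : l - 1 + 1 = l :=
        tsub_add_cancel_of_le fun i =>
          (Nat.one_le_iff_ne_zero.2 h0).trans ((mem_monotoneTuples.1 hl).2 (Fin.zero_le i))
      exact ⟨l - 1, add_one_mem_monotoneTuples.1 (hpos.symm ▸ hl), hpos⟩
  · refine (Finset.sum_nbij (Fin.cons 0) (fun l hl => ?_) (Fin.cons_right_injective _).injOn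
      (fun l hl => ?_) fun l _ => rfl).symm
    · simpa using cons_zero_mem_monotoneTuples.2 hl
    · obtain ⟨hl, h0⟩ := Finset.mem_filter.1 hl
      have hcons : Fin.cons 0 (Fin.tail l) = l := h0 ▸ Fin.cons_self_tail l
      exact ⟨Fin.tail l, cons_zero_mem_monotoneTuples.1 (hcons.symm ▸ hl), hcons⟩

end MonotoneTuples

/-- The sum of the alternants of `t` over all weakly increasing sequences with entries less
than `b`; up to the Vandermonde determinant this is the sum of the Schur polynomials of the
partitions contained in an `n × (b - 1)` rectangle. -/
noncomputable def alternantSum {R : Type*} [CommRing R] (n b : ℕ) (t : Fin n → R) : R :=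
  ∑ l ∈ monotoneTuples n b, alternant t l

lemma alternantSum_succ {R : Type*} [CommRing R] (n b : ℕ) (t : Fin (n + 1) → R) :
    alternantSum (n + 1) (b + 1) t = (∏ j, t j) * alternantSum (n + 1) b t +
      ∑ j : Fin (n + 1),
        (-1) ^ (j : ℕ) * (∏ i, j.removeNth t i) * alternantSum n (b + 1) (j.removeNth t) := by
  simp only [alternantSum, sum_monotoneTuples_succ, alternant_add_one, alternant_cons_zero,
    Finset.mul_sum]
  rw [Finset.sum_comm]

section PairProducts

variable {M : Type*} [CommMonoid M]

lemma prod_prod_Ioi_eq_prod_prod_ite {n : ℕ} (f : Fin n → Fin n → M) :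
    ∏ i, ∏ j ∈ Finset.Ioi i, f i j = ∏ i, ∏ j, if i < j then f i j else 1 := by
  simp only [← Finset.prod_filter, Finset.filter_lt_eq_Ioi]

lemma prod_prod_Ioi_succAbove {n : ℕ} {f : Fin (n + 1) → Fin (n + 1) → M}
    (hf : ∀ i j, f i j = f j i) (p : Fin (n + 1)) :
    ∏ i, ∏ j ∈ Finset.Ioi i, f i j =
      (∏ i, ∏ j ∈ Finset.Ioi i, f (p.succAbove i) (p.succAbove j)) *
        ∏ i, f (p.succAbove i) p := by
  have hpair (i : Fin n) : (if p < p.succAbove i then f p (p.succAbove i) else 1) *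
      (if p.succAbove i < p then f (p.succAbove i) p else 1) = f (p.succAbove i) p := by
    rcases lt_or_gt_of_ne (Fin.succAbove_ne p i) with h | h
    · rw [if_neg h.not_gt, if_pos h, one_mul]
    · rw [if_neg h.not_gt, if_pos h, mul_one, hf]
  rw [← Finset.prod_congr rfl fun i _ => hpair i]
  rw [prod_prod_Ioi_eq_prod_prod_ite, prod_prod_Ioi_eq_prod_prod_ite]
  simp only [Fin.prod_univ_succAbove _ p, lt_irrefl, if_false, one_mul,
    Fin.succAbove_lt_succAbove_iff, Finset.prod_mul_distrib]
  ac_rfl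

lemma prod_prod_Ioi_rev {n : ℕ} {f : Fin n → Fin n → M} (hf : ∀ i j, f i j = f j i) :
    ∏ i : Fin n, ∏ j ∈ Finset.Ioi i, f i.rev j.rev = ∏ i, ∏ j ∈ Finset.Ioi i, f i j := by
  calc ∏ i : Fin n, ∏ j ∈ Finset.Ioi i, f i.rev j.rev
      = ∏ i : Fin n, ∏ j ∈ Finset.Iio i.rev, f i.rev j :=
        Finset.prod_congr rfl fun i _ => by
          rw [← Fin.map_revPerm_Ioi, Finset.prod_map]
          rfl
    _ = ∏ i, ∏ j ∈ Finset.Iio i, f i j :=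
        Equiv.prod_comp Fin.revPerm fun i => ∏ j ∈ Finset.Iio i, f i j
    _ = ∏ j, ∏ i ∈ Finset.Ioi j, f i j := Finset.prod_comm' (by simp)
    _ = ∏ i, ∏ j ∈ Finset.Ioi i, f i j := by simp only [hf]

lemma prod_Icc_one_eq_prod_fin (n : ℕ) (f : ℕ → M) :
    ∏ i ∈ Finset.Icc 1 n, f i = ∏ i : Fin n, f (i + 1) := by
  rw [Fin.prod_univ_eq_prod_range fun i => f (i + 1), Finset.range_eq_Ico,
    Finset.prod_Ico_add' f 0 n 1]
  rfl

lemma prod_Icc_prod_Ioc_eq_prod_fin (n : ℕ) (f : ℕ → ℕ → M) :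
    ∏ i ∈ Finset.Icc 1 n, ∏ j ∈ Finset.Ioc i n, f i j =
      ∏ i : Fin n, ∏ j ∈ Finset.Ioi i, f (i + 1) (j + 1) := by
  rw [prod_Icc_one_eq_prod_fin]
  refine Finset.prod_congr rfl fun i _ => ?_
  have hshift : Finset.Ioc (i + 1 : ℕ) n =
      ((Finset.Ioi i).map Fin.valEmbedding).map (addRightEmbedding 1) := by
    rw [Fin.map_valEmbedding_Ioi, Finset.map_add_right_Ioo]
    ext j
    simp
  rw [hshift, Finset.prod_map, Finset.prod_map]
  rfl

end PairProducts

section BoundedLittlewood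

variable {R : Type*} [CommRing R] {n : ℕ}

/-- The denominator `∏ i, (1 - t_i) * ∏ i < j, (1 - t_i t_j)` of Littlewood's identity. -/
def littlewoodDenom (t : Fin n → R) : R :=
  (∏ i, (1 - t i)) * ∏ i, ∏ j ∈ Finset.Ioi i, (1 - t i * t j)

lemma littlewoodDenom_eq_mul_removeNth (t : Fin (n + 1) → R) (j : Fin (n + 1)) :
    littlewoodDenom t =
      (1 - t j) * (∏ i, (1 - j.removeNth t i * t j)) * littlewoodDenom (j.removeNth t) := by
  simp only [littlewoodDenom, Fin.prod_univ_succAbove (fun i => 1 - t i) j, Fin.removeNth]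
  rw [prod_prod_Ioi_succAbove (fun i l => by rw [mul_comm (t i)]) j]
  ring

/-- The row vector `(t_j ^ i - t_j ^ (N - i))_j`. The subtraction `N - i` truncates, so this is
only meaningful for `i ≤ N`. -/
def antisymmPow (t : Fin n → R) (N i : ℕ) : Fin n → R :=
  fun j => t j ^ i - t j ^ (N - i)

lemma one_add_mul_antisymmPow (t : Fin n → R) {N i : ℕ} (hi : i ≤ N) :
    (1 + t) * antisymmPow t N i = antisymmPow t (N + 1) i + antisymmPow t (N + 1) (i + 1) := by
  ext j
  simp only [antisymmPow, Pi.mul_apply, Pi.add_apply, Pi.one_apply, Nat.sub_add_comm hi,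
    Nat.add_sub_add_right]
  ring

/-- The type `B` alternant `det (t_j ^ i - t_j ^ (N - i))`. -/
def antisymmAlternant (N : ℕ) (t : Fin n → R) : R :=
  (Matrix.of fun i : Fin n => antisymmPow t N i).det

lemma prod_mul_antisymmAlternant {N : ℕ} (hN : n ≤ N) (t : Fin n → R) :
    (∏ j, t j) * antisymmAlternant (N - 1) t =
      (Matrix.of fun i : Fin n => antisymmPow t (N + 1) (i + 1)).det := by
  rw [antisymmAlternant, ← Matrix.det_mul_row]
  congr 1
  ext i j
  have hexp : N + 1 - (i + 1 : ℕ) = N - 1 - i + 1 := by omega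
  simp only [Matrix.of_apply, antisymmPow, hexp]
  ring

/- Since `t_j` is a root of `∏ i, (z - t_i)`, the reversed polynomial `z ^ (N - n) ∏ i, (z - t_i)`
may be subtracted for free from the expansion of `∏ i, (1 - t_i z)` at `z = t_j`. -/
lemma prod_one_sub_mul_eq_sum_antisymmPow (t : Fin n → R) {N : ℕ} (hN : n ≤ N) (j : Fin n) :
    ∏ i, (1 - t i * t j) =
      ∑ S : Finset (Fin n), (-1) ^ S.card * (∏ i ∈ S, t i) * antisymmPow t N S.card j := by
  have hexpand : ∏ i, (1 - t i * t j) =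
      ∑ S : Finset (Fin n), (-1) ^ S.card * (∏ i ∈ S, t i) * t j ^ S.card := by
    simp [Finset.prod_sub, Finset.prod_mul_distrib, mul_assoc]
  have hroot : ∑ S : Finset (Fin n), (-1) ^ S.card * (∏ i ∈ S, t i) * t j ^ (N - S.card) = 0 := by
    calc _ = t j ^ (N - n) * ∏ i, (t j - t i) := by
          rw [Finset.prod_sub, Finset.powerset_univ, Finset.mul_sum]
          refine Finset.sum_congr rfl fun S _ => ?_
          have hS : S.card ≤ n := by simpa using S.card_le_univ
          rw [← Nat.sub_add_sub_cancel hN hS, pow_add, Finset.prod_const,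
            ← Finset.compl_eq_univ_sdiff, Finset.card_compl, Fintype.card_fin]
          ring
      _ = 0 := by
          rw [Finset.prod_eq_zero (Finset.mem_univ j) (sub_self _), mul_zero]
  simp only [antisymmPow, mul_sub, Finset.sum_sub_distrib, hexpand, hroot, sub_zero]

lemma detCons_add_succ_zero (B : ℕ → Fin (n + 1) → R) :
    detCons (fun i : Fin n => B i + B (i + 1)) (B 0) =
      (Matrix.of fun i : Fin (n + 1) => B i).det := by
  rw [detCons_apply]
  refine (Matrix.det_eq_of_forall_row_eq_smul_add_pred (fun _ => -1) (fun j => ?_)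
    fun i j => ?_).symm
  · simp
  · simp

lemma detCons_add_succ (B : ℕ → Fin (n + 1) → R) {s : ℕ} (hs : s ≤ n) :
    detCons (fun i : Fin n => B i + B (i + 1)) (B s) =
      (-1) ^ s * (Matrix.of fun i : Fin (n + 1) => B i).det := by
  induction s with
  | zero => rw [detCons_add_succ_zero, pow_zero, one_mul]
  | succ s ih =>
    have hrow : detCons (fun i : Fin n => B i + B (i + 1)) (B s + B (s + 1)) = 0 := by
      rw [detCons_apply]
      exact Matrix.det_zero_of_row_eq (Fin.succ_ne_zero ⟨s, hs⟩).symm rfl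
    rw [map_add, ih (by omega)] at hrow
    rw [pow_succ]
    linear_combination hrow

lemma sum_subsets_mul_detCons_add_succ (t : Fin (n + 1) → R) (B : ℕ → Fin (n + 1) → R) :
    detCons (fun i : Fin n => B (i + 1) + B (i + 2))
        (∑ S : Finset (Fin (n + 1)), ((-1) ^ S.card * ∏ i ∈ S, t i) • B S.card) =
      detCons (fun i : Fin n => B (i + 1) + B (i + 2)) (B 0 + B 1) -
        (∏ j, (1 + t j)) * (Matrix.of fun i : Fin (n + 1) => B (i + 1)).det := by
  set φ := detCons fun i : Fin n => B (i + 1) + B (i + 2)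
  set D := (Matrix.of fun i : Fin (n + 1) => B (i + 1)).det
  have hφ {s : ℕ} (hs : s ≤ n) : φ (B (s + 1)) = (-1) ^ s * D :=
    detCons_add_succ (fun i => B (i + 1)) hs
  have hterm (S : Finset (Fin (n + 1))) : φ (((-1) ^ S.card * ∏ i ∈ S, t i) • B S.card) =
      (if S = ∅ then φ (B 0) + D else 0) - (∏ i ∈ S, t i) * D := by
    rcases S.eq_empty_or_nonempty with rfl | hS
    · simp
    · obtain ⟨s, hs⟩ := Nat.exists_eq_add_one.2 hS.card_pos
      have hsn : s ≤ n := by simpa [hs] using S.card_le_univ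
      have hsign : (-1 : R) ^ s * (-1) ^ s = 1 := by rw [← mul_pow]; simp
      rw [if_neg hS.ne_empty, map_smul, hs, hφ hsn, smul_eq_mul, pow_succ]
      linear_combination (-(∏ i ∈ S, t i) * D) * hsign
  have h1 : φ (B 1) = D := by simpa using hφ n.zero_le
  rw [map_sum, Finset.prod_one_add, Finset.powerset_univ, Finset.sum_mul, map_add, h1]
  simp only [hterm, Finset.sum_sub_distrib, Finset.sum_ite_eq', Finset.mem_univ, if_true]

lemma antisymmAlternant_eq_detCons (N : ℕ) (t : Fin (n + 1) → R) :
    antisymmAlternant N t =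
      detCons (fun i : Fin n => antisymmPow t N (i + 1)) (antisymmPow t N 0) := by
  rw [detCons_apply, antisymmAlternant]
  congr 1
  ext i j
  cases i using Fin.cases <;> rfl

lemma prod_one_add_mul_detCons_antisymmPow {N : ℕ} (hN : n ≤ N) (t v : Fin (n + 1) → R) :
    (∏ j, (1 + t j)) * detCons (fun i : Fin n => antisymmPow t N (i + 1)) v =
      detCons (fun i : Fin n => antisymmPow t (N + 1) (i + 1) + antisymmPow t (N + 1) (i + 2))
        ((1 + t) * v) := by
  have hrows (i : Fin n) : (1 + t) * antisymmPow t N (i + 1) =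
      antisymmPow t (N + 1) (i + 1) + antisymmPow t (N + 1) (i + 2) :=
    one_add_mul_antisymmPow t (by omega)
  simp only [← hrows]
  exact (detCons_mul_row (1 + t) _ v).symm

lemma antisymmAlternant_succ [IsDomain R] {N : ℕ} (hN : n ≤ N) (t : Fin (n + 1) → R)
    (ht : ∀ j, 1 + t j ≠ 0) :
    antisymmAlternant (N + 1) t = (∏ j, t j) * antisymmAlternant N t +
      ∑ j : Fin (n + 1), (-1) ^ (j : ℕ) * ((1 - t j) * ∏ i, (1 - j.removeNth t i * t j)) *
        ((∏ i, j.removeNth t i) * antisymmAlternant (N - 1) (j.removeNth t)) := by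
  set r : Fin (n + 1) → R := fun j => (1 - t j) * ∏ i, (1 - j.removeNth t i * t j)
  have hN' : n + 1 ≤ N + 1 := Nat.add_le_add_right hN 1
  have hsum : ∑ j : Fin (n + 1), (-1) ^ (j : ℕ) * r j *
      ((∏ i, j.removeNth t i) * antisymmAlternant (N - 1) (j.removeNth t)) =
      detCons (fun i : Fin n => antisymmPow t (N + 1) (i + 1)) r := by
    simp only [detCons_eq_sum, prod_mul_antisymmAlternant hN]
    rfl
  have hr : (1 + t) * r = ∑ S : Finset (Fin (n + 1)),
      ((-1) ^ S.card * ∏ i ∈ S, t i) • antisymmPow t (N + 2) S.card := by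
    ext j
    rw [Finset.sum_apply]
    refine Eq.trans ?_ (prod_one_sub_mul_eq_sum_antisymmPow t (by omega) j)
    rw [Fin.prod_univ_succAbove _ j, Pi.mul_apply, Pi.add_apply, Pi.one_apply]
    simp only [r, Fin.removeNth]
    ring
  have hlast : (∏ j, t j) * antisymmAlternant N t =
      (Matrix.of fun i : Fin (n + 1) => antisymmPow t (N + 2) (i + 1)).det :=
    prod_mul_antisymmAlternant hN' t
  have hprod : ∏ j, (1 + t j) ≠ 0 := Finset.prod_ne_zero_iff.2 fun j _ => ht j
  refine mul_left_cancel₀ hprod ?_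
  rw [hsum, mul_add, antisymmAlternant_eq_detCons, hlast,
    prod_one_add_mul_detCons_antisymmPow (Nat.le_of_succ_le hN'),
    prod_one_add_mul_detCons_antisymmPow (Nat.le_of_succ_le hN'), hr,
    sum_subsets_mul_detCons_add_succ, one_add_mul_antisymmPow t (Nat.zero_le _)]
  ring

theorem alternantSum_mul_littlewoodDenom [IsDomain R] (b : ℕ) (t : Fin n → R)
    (ht : ∀ j, 1 + t j ≠ 0) :
    alternantSum n b t * littlewoodDenom t = antisymmAlternant (b + 2 * n - 2) t := by
  induction n generalizing b with
  | zero =>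
    simp [alternantSum, monotoneTuples, littlewoodDenom, antisymmAlternant, alternant,
      Subsingleton.monotone]
  | succ n ihn =>
    rw [show b + 2 * (n + 1) - 2 = b + 2 * n by omega]
    induction b with
    | zero =>
      have hlast : antisymmPow t (0 + 2 * n) n = 0 := by
        ext j
        simp [antisymmPow, two_mul]
      rw [antisymmAlternant, Matrix.det_eq_zero_of_row_eq_zero (Fin.last n) (congrFun hlast)]
      simp [alternantSum, monotoneTuples]
    | succ b ihb =>
      rw [alternantSum_succ, add_mul, mul_assoc, ihb, add_right_comm,
        antisymmAlternant_succ (by omega) t ht, Finset.sum_mul]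
      congr 1
      refine Finset.sum_congr rfl fun j _ => ?_
      rw [littlewoodDenom_eq_mul_removeNth t j,
        show b + 2 * n - 1 = b + 1 + 2 * n - 2 by omega,
        ← ihn (b + 1) (j.removeNth t) fun i => ht _]
      ring

end BoundedLittlewood

section Branching

variable {R : Type*} [CommRing R] {n : ℕ}

/-- The tuples `u` interlacing with `l`: `l 0 ≤ u 0 ≤ l 1 ≤ u 1 ≤ ⋯ ≤ l n`. -/
def interlacing (l : Fin (n + 1) → ℕ) : Finset (Fin n → ℕ) :=
  Fintype.piFinset fun i => Finset.Icc (l i.castSucc) (l i.succ)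

lemma mem_interlacing {l : Fin (n + 1) → ℕ} {u : Fin n → ℕ} :
    u ∈ interlacing l ↔ ∀ i, l i.castSucc ≤ u i ∧ u i ≤ l i.succ := by
  simp [interlacing]

lemma mem_monotoneTuples_of_mem_interlacing {b : ℕ} {l : Fin (n + 1) → ℕ}
    (hl : l ∈ monotoneTuples (n + 1) b) {u : Fin n → ℕ} (hu : u ∈ interlacing l) :
    u ∈ monotoneTuples n b := by
  rw [mem_monotoneTuples] at hl ⊢
  rw [mem_interlacing] at hu
  refine ⟨fun i => (hu i).2.trans_lt (hl.1 _), fun i j hij => ?_⟩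
  rcases hij.eq_or_lt with rfl | hij
  · rfl
  · exact ((hu i).2.trans (hl.2 (Fin.succ_le_castSucc_iff.2 hij))).trans (hu j).1

lemma det_eq_det_sub_of_col_zero (M : Matrix (Fin (n + 1)) (Fin (n + 1)) R)
    (hM : ∀ i, M i 0 = 1) :
    M.det = (Matrix.of fun i j : Fin n => M i.succ j.succ - M i.castSucc j.succ).det := by
  rw [Matrix.det_eq_of_forall_row_eq_smul_add_pred (A := M)
    (B := Matrix.of (Fin.cons (M 0) fun i : Fin n => M i.succ - M i.castSucc)) (fun _ => 1)
    (fun j => by simp) (fun i j => by simp), Matrix.det_succ_column_zero, Fin.sum_univ_succ]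
  simp only [Matrix.of_apply, Fin.cons_zero, Fin.cons_succ, Pi.sub_apply, hM, sub_self,
    mul_zero, zero_mul, Finset.sum_const_zero, add_zero, Fin.val_zero, pow_zero, one_mul]
  congr 1

lemma sum_interlacing_alternant (t : Fin n → R) (l : Fin (n + 1) → ℕ) :
    ∑ u ∈ interlacing l, alternant t u =
      (Matrix.of fun i j : Fin n =>
        ∑ x ∈ Finset.Ico (l i.castSucc + i : ℕ) (l i.succ + 1 + i), t j ^ x).det := by
  refine ((Matrix.detRowAlternating (R := R)).toMultilinearMap.map_sum_finset
    (fun (i : Fin n) (x : ℕ) (j : Fin n) => t j ^ (x + i : ℕ))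
    fun i => Finset.Icc (l i.castSucc) (l i.succ)).symm.trans ?_
  refine congrArg Matrix.det (Matrix.ext fun i j => ?_)
  rw [Finset.sum_apply, Matrix.of_apply, ← Finset.sum_Ico_add']
  rfl

lemma prod_mul_sum_interlacing_alternant (y : R) {l : Fin (n + 1) → ℕ} (hl : Monotone l) :
    (∏ j : Fin n, (y ^ (j + 1 : ℕ) - 1)) *
        ∑ u ∈ interlacing l, alternant (fun j => y ^ (j + 1 : ℕ)) u =
      alternant (fun j => y ^ (j : ℕ)) l := by
  rw [sum_interlacing_alternant, ← Matrix.det_mul_row, alternant,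
    det_eq_det_sub_of_col_zero _ fun i => by simp]
  congr 1
  ext i j
  have hle : l i.castSucc + i ≤ l i.succ + 1 + i :=
    Nat.add_le_add_right ((hl i.castSucc_le_succ).trans (Nat.le_succ _)) _
  simp only [Matrix.of_apply, Fin.val_succ, Fin.val_castSucc]
  rw [mul_comm, geom_sum_Ico_mul _ hle, add_right_comm, add_assoc (l i.succ)]

/-- The point `(q, q ^ 3, …, q ^ (2 * n - 1))`. -/
def oddPowers (q : R) (n : ℕ) (j : Fin n) : R :=
  q ^ (2 * j + 1 : ℕ)

lemma oddPowers_eq_mul_pow (q : R) (n : ℕ) :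
    oddPowers q n = fun j : Fin n => q * (q ^ 2) ^ (j : ℕ) := by
  ext j
  rw [oddPowers, ← pow_mul, pow_succ']

lemma exists_alternant_oddPowers_eq_mul_sum_interlacing (q : R) (n : ℕ) :
    ∃ c : R, ∀ l : Fin (n + 1) → ℕ, Monotone l →
      alternant (oddPowers q (n + 1)) l =
        c * (q ^ (∑ i, l i) *
          ∑ u ∈ interlacing l, q ^ (∑ i, u i) * alternant (oddPowers q n) u) := by
  refine ⟨q ^ (∑ i : Fin (n + 1), (i : ℕ)) * (∏ j : Fin n, ((q ^ 2) ^ (j + 1 : ℕ) - 1)) *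
    q ^ (∑ i : Fin n, (i : ℕ)), fun l hl => ?_⟩
  have hshift : (fun j : Fin n => (q ^ 2) ^ (j + 1 : ℕ)) = fun j => q * oddPowers q n j := by
    ext j
    rw [oddPowers]
    ring
  rw [oddPowers_eq_mul_pow q (n + 1), alternant_const_mul,
    ← prod_mul_sum_interlacing_alternant (q ^ 2) hl, hshift]
  simp only [alternant_const_mul, Finset.sum_add_distrib, pow_add, Finset.mul_sum]
  refine Finset.sum_congr rfl fun u _ => ?_
  ring

end Branching

section SymmArrays

variable {n b : ℕ}

/-- The symmetric `n × n` arrays with entries less than `b` that weakly increase along rows and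
columns. -/
noncomputable def symmArrays (n b : ℕ) : Finset (Fin n → Fin n → ℕ) :=
  (Fintype.piFinset fun _ => Fintype.piFinset fun _ => Finset.range b).filter
    fun a => (∀ i j, a i j = a j i) ∧ ∀ j, Monotone fun i => a i j

lemma mem_symmArrays {a : Fin n → Fin n → ℕ} :
    a ∈ symmArrays n b ↔
      (∀ i j, a i j < b) ∧ (∀ i j, a i j = a j i) ∧ ∀ j, Monotone fun i => a i j := by
  simp [symmArrays]

lemma le_of_mem_symmArrays {a : Fin n → Fin n → ℕ} (ha : a ∈ symmArrays n b) {i j i' j' : Fin n}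
    (hi : i ≤ i') (hj : j ≤ j') : a i j ≤ a i' j' := by
  obtain ⟨-, hsymm, hmono⟩ := mem_symmArrays.1 ha
  calc a i j ≤ a i' j := hmono j hi
    _ = a j i' := hsymm i' j
    _ ≤ a j' i' := hmono i' hj
    _ = a i' j' := hsymm j' i'

lemma diag_mem_monotoneTuples {a : Fin n → Fin n → ℕ} (ha : a ∈ symmArrays n b) :
    (fun i => a i i) ∈ monotoneTuples n b :=
  mem_monotoneTuples.2
    ⟨fun i => (mem_symmArrays.1 ha).1 i i, fun _ _ hij => le_of_mem_symmArrays ha hij hij⟩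

/-- The array obtained from a symmetric array by removing the main diagonal. -/
def peelDiag (a : Fin (n + 1) → Fin (n + 1) → ℕ) (i j : Fin n) : ℕ :=
  a (min i j).castSucc (max i j).succ

/-- The symmetric array with diagonal `l` and off-diagonal part `c`; inverse to `peelDiag`. -/
def addDiag (l : Fin (n + 1) → ℕ) (c : Fin n → Fin n → ℕ) (i j : Fin (n + 1)) : ℕ :=
  if h : i = j then l i else c ⟨min (i : ℕ) j, by omega⟩ ⟨max (i : ℕ) j - 1, by omega⟩

lemma addDiag_self (l : Fin (n + 1) → ℕ) (c : Fin n → Fin n → ℕ) (i : Fin (n + 1)) :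
    addDiag l c i i = l i :=
  dif_pos rfl

lemma addDiag_comm (l : Fin (n + 1) → ℕ) (c : Fin n → Fin n → ℕ) (i j : Fin (n + 1)) :
    addDiag l c i j = addDiag l c j i := by
  by_cases h : i = j
  · rw [h]
  · simp only [addDiag, h, Ne.symm h, dif_neg, not_false_iff, min_comm (i : ℕ), max_comm (i : ℕ)]

lemma addDiag_castSucc_succ (l : Fin (n + 1) → ℕ) (c : Fin n → Fin n → ℕ) {i j : Fin n}
    (hij : i ≤ j) : addDiag l c i.castSucc j.succ = c i j := by
  have hle : (i : ℕ) ≤ j + 1 := (Fin.le_def.1 hij).trans (Nat.le_succ j)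
  simp [addDiag, (Fin.castSucc_lt_succ_iff.2 hij).ne, hle]

lemma peelDiag_mem_symmArrays {a : Fin (n + 1) → Fin (n + 1) → ℕ}
    (ha : a ∈ symmArrays (n + 1) b) : peelDiag a ∈ symmArrays n b := by
  refine mem_symmArrays.2
    ⟨fun i j => (mem_symmArrays.1 ha).1 _ _, fun i j => ?_, fun j i i' hi => ?_⟩
  · simp only [peelDiag, min_comm, max_comm]
  · exact le_of_mem_symmArrays ha (Fin.castSucc_le_castSucc_iff.2 (min_le_min_right j hi))
      (Fin.succ_le_succ_iff.2 (max_le_max_right j hi))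

lemma diag_peelDiag_mem_interlacing {a : Fin (n + 1) → Fin (n + 1) → ℕ}
    (ha : a ∈ symmArrays (n + 1) b) :
    (fun i => peelDiag a i i) ∈ interlacing fun i => a i i := by
  simp only [mem_interlacing, peelDiag, min_self, max_self]
  exact fun i => ⟨le_of_mem_symmArrays ha le_rfl i.castSucc_le_succ,
    le_of_mem_symmArrays ha i.castSucc_le_succ le_rfl⟩

lemma addDiag_mem_symmArrays {l : Fin (n + 1) → ℕ} {c : Fin n → Fin n → ℕ}
    (hc : c ∈ symmArrays n b) (hl : ∀ i, l i < b) (hlc : (fun i => c i i) ∈ interlacing l) :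
    addDiag l c ∈ symmArrays (n + 1) b := by
  refine mem_symmArrays.2 ⟨fun i j => ?_, addDiag_comm l c, fun j => ?_⟩
  · unfold addDiag
    split_ifs
    exacts [hl i, (mem_symmArrays.1 hc).1 _ _]
  refine Fin.monotone_iff_le_succ.2 fun i => ?_
  obtain ⟨hlow, hupp⟩ := mem_interlacing.1 hlc i
  rcases eq_or_ne i.castSucc j with rfl | hj
  · rwa [addDiag_self, addDiag_comm, addDiag_castSucc_succ l c le_rfl]
  rcases eq_or_ne i.succ j with rfl | hj'
  · rwa [addDiag_self, addDiag_castSucc_succ l c le_rfl]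
  · rw [addDiag, addDiag, dif_neg hj, dif_neg hj']
    refine le_of_mem_symmArrays hc ?_ ?_ <;>
    simp only [Fin.mk_le_mk, Fin.val_castSucc, Fin.val_succ] <;> omega

lemma addDiag_peelDiag {a : Fin (n + 1) → Fin (n + 1) → ℕ} (ha : a ∈ symmArrays (n + 1) b) :
    addDiag (fun i => a i i) (peelDiag a) = a := by
  have hlt {i j : Fin (n + 1)} (hij : i < j) :
      addDiag (fun i => a i i) (peelDiag a) i j = a i j := by
    obtain ⟨i, rfl⟩ := Fin.exists_castSucc_eq.2 (hij.trans_le (Fin.le_last j)).ne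
    obtain ⟨j, rfl⟩ := Fin.exists_succ_eq.2 (((Fin.zero_le _).trans_lt hij).ne')
    have hij' : i ≤ j := Fin.castSucc_lt_succ_iff.1 hij
    rw [addDiag_castSucc_succ _ _ hij', peelDiag, min_eq_left hij', max_eq_right hij']
  ext i j
  rcases lt_trichotomy i j with hij | rfl | hij
  · exact hlt hij
  · exact addDiag_self _ _ _
  · rw [addDiag_comm, hlt hij, (mem_symmArrays.1 ha).2.1]

lemma peelDiag_addDiag (l : Fin (n + 1) → ℕ) {c : Fin n → Fin n → ℕ} (hc : c ∈ symmArrays n b) :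
    peelDiag (addDiag l c) = c := by
  ext i j
  rw [peelDiag, addDiag_castSucc_succ l c min_le_max]
  rcases le_total i j with hij | hij
  · rw [min_eq_left hij, max_eq_right hij]
  · rw [min_eq_right hij, max_eq_left hij, (mem_symmArrays.1 hc).2.1]

lemma sum_sum_Ici_add_swap {M : Type*} [AddCommMonoid M] (f : Fin n → Fin n → M) :
    ∑ i, ∑ j ∈ Finset.Ici i, (f i j + f j i) = ∑ i, f i i + ∑ i, ∑ j, f i j := by
  have hrow (i : Fin n) : ∑ j ∈ Finset.Ici i, (f i j + f j i) =
      f i i + (f i i + ∑ j ∈ Finset.Ioi i, (f j i + f i j)) := by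
    rw [Finset.Ici_eq_cons_Ioi, Finset.sum_cons, add_assoc]
    simp only [add_comm (f _ i)]
  rw [Finset.sum_congr rfl fun i _ => hrow i, Finset.sum_add_distrib, Finset.sum_add_distrib,
    Finset.sum_sum_Ioi_add_eq_sum_sum_off_diag, ← Finset.sum_add_distrib, Finset.sum_comm (f := f)]
  exact congrArg _ (Finset.sum_congr rfl fun i _ =>
    (Fintype.sum_eq_add_sum_compl i fun j => f j i).symm)

lemma sum_sum_eq_sum_diag_add_peelDiag {a : Fin (n + 1) → Fin (n + 1) → ℕ}
    (ha : a ∈ symmArrays (n + 1) b) :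
    ∑ i, ∑ j, a i j = ∑ i, a i i + (∑ i, peelDiag a i i + ∑ i, ∑ j, peelDiag a i j) := by
  have hsplit : ∑ i, ∑ j, a i j = ∑ i, a i i + ∑ i, ∑ j, a i (i.succAbove j) := by
    rw [← Finset.sum_add_distrib]
    exact Finset.sum_congr rfl fun i _ => Fin.sum_univ_succAbove _ i
  rw [hsplit, Fin.sum_sum_eq_sum_triangle_add, ← sum_sum_Ici_add_swap]
  congr 1
  refine Finset.sum_congr rfl fun i _ => Finset.sum_congr rfl fun j hj => ?_
  have hij : i ≤ j := Finset.mem_Ici.1 hj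
  rw [Fin.succAbove_castSucc_of_le _ _ hij, Fin.succAbove_succ_of_le _ _ hij, peelDiag, peelDiag,
    min_eq_left hij, max_eq_right hij, min_eq_right hij, max_eq_left hij,
    (mem_symmArrays.1 ha).2.1 j.succ]

end SymmArrays

section DiagGenFun

variable {R : Type*} [CommRing R] {n b : ℕ}

/-- The generating function of the arrays in `symmArrays n b` with main diagonal `l`. -/
noncomputable def diagGenFun (q : R) (n b : ℕ) (l : Fin n → ℕ) : R :=
  ∑ a ∈ symmArrays n b with (fun i => a i i) = l, q ^ (∑ i, ∑ j, a i j)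

lemma diagGenFun_succ (q : R) {l : Fin (n + 1) → ℕ} (hl : ∀ i, l i < b) :
    diagGenFun q (n + 1) b l =
      q ^ (∑ i, l i) * ∑ u ∈ interlacing l, q ^ (∑ i, u i) * diagGenFun q n b u := by
  simp only [diagGenFun, Finset.mul_sum]
  rw [← Finset.sum_fiberwise_of_maps_to (g := fun a i => peelDiag a i i) (t := interlacing l)]
  · refine Finset.sum_congr rfl fun u hu => ?_
    refine Finset.sum_nbij' peelDiag (addDiag l) (fun a ha => ?_) (fun c hc => ?_)
      (fun a ha => ?_) (fun c hc => ?_) fun a ha => ?_ <;>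
    simp only [Finset.mem_filter] at *
    · exact ⟨peelDiag_mem_symmArrays ha.1.1, ha.2⟩
    · obtain ⟨hc, rfl⟩ := hc
      rw [peelDiag_addDiag l hc]
      exact ⟨⟨addDiag_mem_symmArrays hc hl hu, funext (addDiag_self l c)⟩, rfl⟩
    · obtain ⟨⟨ha, rfl⟩, -⟩ := ha
      exact addDiag_peelDiag ha
    · exact peelDiag_addDiag l hc.1
    · obtain ⟨⟨ha, rfl⟩, rfl⟩ := ha
      rw [sum_sum_eq_sum_diag_add_peelDiag ha, pow_add, pow_add]
  · intro a ha
    obtain ⟨ha', rfl⟩ := Finset.mem_filter.1 ha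
    exact diag_peelDiag_mem_interlacing ha'

lemma alternant_oddPowers_zero_mul_diagGenFun (q : R) {l : Fin n → ℕ}
    (hl : l ∈ monotoneTuples n b) :
    alternant (oddPowers q n) 0 * diagGenFun q n b l = alternant (oddPowers q n) l := by
  induction n with
  | zero =>
    have hunique : symmArrays 0 b = {0} := by
      ext a
      simp [mem_symmArrays, Subsingleton.elim a 0]
    simp [diagGenFun, hunique, alternant, Subsingleton.elim _ l]
  | succ n ih =>
    obtain ⟨c, hc⟩ := exists_alternant_oddPowers_eq_mul_sum_interlacing q n
    have hzero : interlacing (0 : Fin (n + 1) → ℕ) = {0} := by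
      ext u
      simp [mem_interlacing, funext_iff]
    have hc0 : alternant (oddPowers q (n + 1)) 0 = c * alternant (oddPowers q n) 0 := by
      simp [hc 0 monotone_const, hzero]
    rw [hc0, hc l (mem_monotoneTuples.1 hl).2, diagGenFun_succ q (mem_monotoneTuples.1 hl).1,
      Finset.mul_sum, Finset.mul_sum, Finset.mul_sum, Finset.mul_sum]
    refine Finset.sum_congr rfl fun u hu => ?_
    rw [← ih (mem_monotoneTuples_of_mem_interlacing hl hu)]
    ring

lemma alternant_oddPowers_zero_mul_sum_symmArrays (q : R) (n b : ℕ) :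
    alternant (oddPowers q n) 0 * ∑ a ∈ symmArrays n b, q ^ (∑ i, ∑ j, a i j) =
      alternantSum n b (oddPowers q n) := by
  rw [← Finset.sum_fiberwise_of_maps_to fun a => diag_mem_monotoneTuples, Finset.mul_sum]
  exact Finset.sum_congr rfl fun l hl => alternant_oddPowers_zero_mul_diagGenFun q hl

end DiagGenFun

section Heights

variable {n m : ℕ} {P : Finset (ℕ × ℕ × ℕ)}

/-- The cells of the solid whose column heights are the entries of `a`. Rows and columns are
reversed, so that arrays increasing in both directions correspond to plane partitions. -/
def arrayCells (a : Fin n → Fin n → ℕ) : Finset (ℕ × ℕ × ℕ) :=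
  (Finset.univ.sigma fun p : Fin n × Fin n => Finset.Icc 1 (a p.1 p.2)).map
    ⟨fun s => (s.1.1.rev + 1, s.1.2.rev + 1, s.2), fun s s' h => by
      simp only [Prod.mk.injEq, add_left_inj, Fin.val_inj, Fin.rev_inj] at h
      exact Sigma.ext (Prod.ext h.1 h.2.1) (heq_of_eq h.2.2)⟩

lemma card_arrayCells (a : Fin n → Fin n → ℕ) : (arrayCells a).card = ∑ i, ∑ j, a i j := by
  simp [arrayCells, Finset.card_sigma, Fintype.sum_prod_type]

lemma mem_arrayCells {a : Fin n → Fin n → ℕ} {x y z : ℕ} :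
    (x, y, z) ∈ arrayCells a ↔
      ∃ i j : Fin n, (i.rev + 1 : ℕ) = x ∧ (j.rev + 1 : ℕ) = y ∧ 1 ≤ z ∧ z ≤ a i j := by
  simp only [arrayCells, Finset.mem_map, Finset.mem_sigma, Finset.mem_univ, true_and,
    Finset.mem_Icc]
  constructor
  · rintro ⟨⟨⟨i, j⟩, w⟩, h, he⟩
    cases he
    exact ⟨i, j, rfl, rfl, h⟩
  · rintro ⟨i, j, rfl, rfl, h⟩
    exact ⟨⟨⟨i, j⟩, z⟩, h, rfl⟩

lemma rev_add_one_mem_arrayCells {a : Fin n → Fin n → ℕ} {i j : Fin n} {z : ℕ} :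
    ((i.rev + 1 : ℕ), (j.rev + 1 : ℕ), z) ∈ arrayCells a ↔ 1 ≤ z ∧ z ≤ a i j := by
  simp [mem_arrayCells, Fin.val_inj, -Fin.val_rev]

lemma exists_rev_add_one_eq {x : ℕ} (hx : 1 ≤ x) (hxn : x ≤ n) :
    ∃ i : Fin n, (i.rev + 1 : ℕ) = x :=
  ⟨⟨n - x, by omega⟩, by simp only [Fin.val_rev]; omega⟩

lemma arrayCells_subset_ppBox {a : Fin n → Fin n → ℕ} (ha : a ∈ symmArrays n (m + 1)) :
    arrayCells a ⊆ ppBox n n m := by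
  rintro ⟨x, y, z⟩ h
  obtain ⟨i, j, rfl, rfl, hz, hza⟩ := mem_arrayCells.1 h
  have hzm : z ≤ m := Nat.lt_succ_iff.1 (hza.trans_lt ((mem_symmArrays.1 ha).1 i j))
  simp only [ppBox, Finset.mem_product, Finset.mem_Icc]
  exact ⟨⟨Nat.succ_pos _, i.rev.is_lt⟩, ⟨Nat.succ_pos _, j.rev.is_lt⟩, hz, hzm⟩

lemma isPlanePartition_arrayCells {a : Fin n → Fin n → ℕ} (ha : a ∈ symmArrays n m) :
    IsPlanePartition (arrayCells a) := by
  constructor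
  · rintro ⟨x, y, z⟩ h
    obtain ⟨i, j, rfl, rfl, hz, -⟩ := mem_arrayCells.1 h
    exact ⟨Nat.succ_pos _, Nat.succ_pos _, hz⟩
  · rintro ⟨x, y, z⟩ h x' y' z' hx hx' hy hy' hz hz'
    obtain ⟨i, j, rfl, rfl, -, hza⟩ := mem_arrayCells.1 h
    obtain ⟨i', rfl⟩ := exists_rev_add_one_eq hx (hx'.trans i.rev.is_lt)
    obtain ⟨j', rfl⟩ := exists_rev_add_one_eq hy (hy'.trans j.rev.is_lt)
    have hi : i ≤ i' := Fin.rev_le_rev.1 (Nat.succ_le_succ_iff.1 hx')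
    have hj : j ≤ j' := Fin.rev_le_rev.1 (Nat.succ_le_succ_iff.1 hy')
    exact rev_add_one_mem_arrayCells.2 ⟨hz, (hz'.trans hza).trans (le_of_mem_symmArrays ha hi hj)⟩

lemma isSymmetricPP_arrayCells {a : Fin n → Fin n → ℕ} (ha : ∀ i j, a i j = a j i) :
    IsSymmetricPP (arrayCells a) := by
  intro x y z
  rw [mem_arrayCells, mem_arrayCells, exists_comm]
  simp only [ha, and_left_comm]

/-- The height of the column of `P` over `(x, y)`, which is `0` if the column is empty. -/
def columnHeight (P : Finset (ℕ × ℕ × ℕ)) (x y : ℕ) : ℕ :=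
  (P.filter fun p => p.1 = x ∧ p.2.1 = y).sup fun p => p.2.2

lemma columnHeight_mono_of_imp {x y x' y' : ℕ} (h : ∀ z, (x, y, z) ∈ P → (x', y', z) ∈ P) :
    columnHeight P x y ≤ columnHeight P x' y' := by
  refine Finset.sup_le ?_
  rintro ⟨_, _, z⟩ hp
  obtain ⟨hz, rfl, rfl⟩ := Finset.mem_filter.1 hp
  have hz' : (x', y', z) ∈ P.filter fun p => p.1 = x' ∧ p.2.1 = y' :=
    Finset.mem_filter.2 ⟨h z hz, rfl, rfl⟩
  exact Finset.le_sup (b := (x', y', z)) (f := fun p => p.2.2) hz'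

lemma le_columnHeight_iff (hP : IsPlanePartition P) {x y z : ℕ} (hz : 1 ≤ z) :
    z ≤ columnHeight P x y ↔ (x, y, z) ∈ P := by
  rw [columnHeight, Finset.le_sup_iff hz]
  constructor
  · rintro ⟨⟨_, _, z'⟩, hp, hzz'⟩
    obtain ⟨hpP, rfl, rfl⟩ := Finset.mem_filter.1 hp
    exact hP.2 _ hpP _ _ z (hP.1 _ hpP).1 le_rfl (hP.1 _ hpP).2.1 le_rfl hz hzz'
  · exact fun h => ⟨_, Finset.mem_filter.2 ⟨h, rfl, rfl⟩, le_rfl⟩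

/-- The `n × n` array of column heights, with the corner of `P` placed last. -/
def heightArray (P : Finset (ℕ × ℕ × ℕ)) (n : ℕ) (i j : Fin n) : ℕ :=
  columnHeight P (i.rev + 1) (j.rev + 1)

lemma heightArray_mem_symmArrays (hbox : P ⊆ ppBox n n m) (hP : IsPlanePartition P)
    (hsymm : IsSymmetricPP P) : heightArray P n ∈ symmArrays n (m + 1) := by
  refine mem_symmArrays.2 ⟨fun i j => ?_, fun i j => ?_, fun j i i' hi => ?_⟩
  · refine Nat.lt_succ_iff.2 (Finset.sup_le fun p hp => ?_)
    have hp' := hbox (Finset.mem_filter.1 hp).1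
    simp only [ppBox, Finset.mem_product, Finset.mem_Icc] at hp'
    exact hp'.2.2.2
  · exact (columnHeight_mono_of_imp fun z => (hsymm _ _ z).1).antisymm
      (columnHeight_mono_of_imp fun z => (hsymm _ _ z).1)
  · exact columnHeight_mono_of_imp fun z hz => hP.2 _ hz _ _ z (Nat.succ_pos _)
      (Nat.succ_le_succ (Fin.rev_le_rev.2 hi)) (Nat.succ_pos _) le_rfl (hP.1 _ hz).2.2 le_rfl

lemma arrayCells_heightArray (hbox : P ⊆ ppBox n n m) (hP : IsPlanePartition P) :
    arrayCells (heightArray P n) = P := by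
  ext ⟨x, y, z⟩
  constructor
  · intro h
    obtain ⟨i, j, rfl, rfl, hz, hle⟩ := mem_arrayCells.1 h
    exact (le_columnHeight_iff hP hz).1 hle
  · intro h
    have hxyz := hbox h
    simp only [ppBox, Finset.mem_product, Finset.mem_Icc] at hxyz
    obtain ⟨⟨hx, hxn⟩, ⟨hy, hyn⟩, hz, -⟩ := hxyz
    obtain ⟨i, rfl⟩ := exists_rev_add_one_eq hx hxn
    obtain ⟨j, rfl⟩ := exists_rev_add_one_eq hy hyn
    exact rev_add_one_mem_arrayCells.2 ⟨hz, (le_columnHeight_iff hP hz).2 h⟩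

lemma heightArray_arrayCells {a : Fin n → Fin n → ℕ} (ha : a ∈ symmArrays n m) :
    heightArray (arrayCells a) n = a := by
  ext i j
  refine eq_of_forall_le_iff fun z => ?_
  rcases z.eq_zero_or_pos with rfl | hz
  · simp
  · rw [heightArray, le_columnHeight_iff (isPlanePartition_arrayCells ha) hz,
      rev_add_one_mem_arrayCells]
    exact and_iff_right hz

/-- The generating function of the symmetric plane partitions in the box `B(n,n,m)`. -/
noncomputable def symmetricPPGenFun {R : Type*} [CommRing R] (q : R) (n m : ℕ) : R :=
  ∑ P ∈ (ppBox n n m).powerset.filter (fun P => IsPlanePartition P ∧ IsSymmetricPP P), q ^ P.card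

lemma symmetricPPGenFun_eq_sum_symmArrays {R : Type*} [CommRing R] (q : R) (n m : ℕ) :
    symmetricPPGenFun q n m = ∑ a ∈ symmArrays n (m + 1), q ^ (∑ i, ∑ j, a i j) := by
  refine Finset.sum_nbij' (heightArray · n) arrayCells (fun P hP => ?_) (fun a ha => ?_)
    (fun P hP => ?_) (fun a ha => heightArray_arrayCells ha) fun P hP => ?_ <;>
  simp only [Finset.mem_filter, Finset.mem_powerset] at *
  · exact heightArray_mem_symmArrays hP.1 hP.2.1 hP.2.2
  · exact ⟨arrayCells_subset_ppBox ha, isPlanePartition_arrayCells ha,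
      isSymmetricPP_arrayCells (mem_symmArrays.1 ha).2.1⟩
  · exact arrayCells_heightArray hP.1 hP.2.1
  · rw [← card_arrayCells, arrayCells_heightArray hP.1 hP.2.1]

end Heights

section OddPowerQuotient

open Polynomial

variable {R : Type*} [CommRing R]

/-- The polynomials `p j` with `u ^ (2 * j + 1) - v ^ (2 * j + 1) = (u - v) * p j (u ^ 2 + v ^ 2)`
whenever `u * v = c`. -/
noncomputable def oddPowerQuotient (c : R) : ℕ → R[X]
  | 0 => 1
  | 1 => X + C c
  | j + 2 => X * oddPowerQuotient c (j + 1) - C (c ^ 2) * oddPowerQuotient c j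

lemma sub_mul_eval_oddPowerQuotient (u v : R) (j : ℕ) :
    (u - v) * (oddPowerQuotient (u * v) j).eval (u ^ 2 + v ^ 2) =
      u ^ (2 * j + 1) - v ^ (2 * j + 1) := by
  induction j using Nat.twoStepInduction with
  | zero => simp [oddPowerQuotient]
  | one =>
    simp only [oddPowerQuotient, eval_add, eval_X, eval_C]
    ring
  | more j ih ih' =>
    simp only [oddPowerQuotient, eval_sub, eval_mul, eval_X, eval_C]
    linear_combination (u ^ 2 + v ^ 2) * ih' - (u * v) ^ 2 * ih

lemma monic_oddPowerQuotient_and_natDegree_eq [Nontrivial R] (c : R) (j : ℕ) :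
    (oddPowerQuotient c j).Monic ∧ (oddPowerQuotient c j).natDegree = j := by
  induction j using Nat.twoStepInduction with
  | zero => simp [oddPowerQuotient]
  | one => exact ⟨monic_X_add_C c, natDegree_X_add_C c⟩
  | more j ih ih' =>
    have hmonic : (X * oddPowerQuotient c (j + 1)).Monic := monic_X.mul ih'.1
    have hdeg : (X * oddPowerQuotient c (j + 1)).natDegree = j + 2 := by
      rw [monic_X.natDegree_mul ih'.1, natDegree_X, ih'.2, add_comm]
    have hlt : (C (c ^ 2) * oddPowerQuotient c j).natDegree <
        (X * oddPowerQuotient c (j + 1)).natDegree := by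
      rw [hdeg]
      exact (natDegree_C_mul_le _ _).trans_lt (by omega)
    refine ⟨hmonic.sub_of_left (degree_lt_degree hlt), ?_⟩
    rw [oddPowerQuotient, natDegree_sub_eq_left_of_natDegree_lt hlt, hdeg]

lemma det_pow_odd_sub_pow_odd {n : ℕ} (u v : Fin n → R) (c : R) (h : ∀ i, u i * v i = c) :
    (Matrix.of fun i j : Fin n => u i ^ (2 * j + 1 : ℕ) - v i ^ (2 * j + 1 : ℕ)).det =
      (∏ i, (u i - v i)) *
        ∏ i, ∏ j ∈ Finset.Ioi i, (u j ^ 2 + v j ^ 2 - (u i ^ 2 + v i ^ 2)) := by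
  nontriviality R
  rw [← Matrix.det_vandermonde fun i => u i ^ 2 + v i ^ 2,
    Matrix.det_eval_matrixOfPolynomials_eq_det_vandermonde (fun i => u i ^ 2 + v i ^ 2)
      (fun j => oddPowerQuotient c j)
      (fun j => (monic_oddPowerQuotient_and_natDegree_eq c j).2)
      (fun j => (monic_oddPowerQuotient_and_natDegree_eq c j).1), ← Matrix.det_mul_column]
  congr 1
  ext i j
  simp only [Matrix.of_apply]
  rw [← h i, sub_mul_eval_oddPowerQuotient]

end OddPowerQuotient

section ProductFormula

variable {R : Type*} [CommRing R]

/-- The numerator of MacMahon's product formula. At `m = 0` it is also the denominator. -/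
def macmahonProd (q : R) (n m : ℕ) : R :=
  (∏ i ∈ Finset.Icc 1 n, (1 - q ^ (m + 2 * i - 1))) *
    ∏ i ∈ Finset.Icc 1 n, ∏ j ∈ Finset.Ioc i n, (1 - q ^ (2 * (m + i + j - 1)))

lemma macmahonProd_eq_prod_fin (q : R) (n m : ℕ) :
    macmahonProd q n m = (∏ i : Fin n, (1 - q ^ (m + 2 * i + 1 : ℕ))) *
      ∏ i : Fin n, ∏ j ∈ Finset.Ioi i, (1 - q ^ (2 * (m + i + j + 1) : ℕ)) := by
  rw [macmahonProd, prod_Icc_one_eq_prod_fin,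
    prod_Icc_prod_Ioc_eq_prod_fin n fun i j => 1 - q ^ (2 * (m + i + j - 1))]
  congr 1
  refine Finset.prod_congr rfl fun i _ => Finset.prod_congr rfl fun j _ => ?_
  rw [show m + (i + 1) + (j + 1) - 1 = m + i + j + 1 by omega]

lemma littlewoodDenom_oddPowers (q : R) (n : ℕ) :
    littlewoodDenom (oddPowers q n) = macmahonProd q n 0 := by
  simp only [littlewoodDenom, macmahonProd_eq_prod_fin, oddPowers, ← pow_add]
  simp only [zero_add]
  congr 1
  refine Finset.prod_congr rfl fun i _ => Finset.prod_congr rfl fun j _ => ?_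
  ring

lemma macmahonProd_eq_prod_rev (q : R) (n m : ℕ) :
    macmahonProd q n m = (∏ i : Fin n, (1 - q ^ (m + 2 * i.rev + 1 : ℕ))) *
      ∏ i : Fin n, ∏ j ∈ Finset.Ioi i, (1 - q ^ (2 * (m + i.rev + j.rev + 1) : ℕ)) := by
  rw [macmahonProd_eq_prod_fin, ← Equiv.prod_comp Fin.revPerm,
    ← prod_prod_Ioi_rev fun i j => by rw [add_right_comm m]]
  rfl

lemma antisymmAlternant_oddPowers_eq_mul {N n : ℕ} (hN : n ≤ N + 1) (q : R) :
    antisymmAlternant N (oddPowers q n) =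
      (∏ i : Fin n, (q ^ (i : ℕ) - q ^ (N - i))) * ∏ i : Fin n, ∏ j ∈ Finset.Ioi i,
        ((q ^ (j : ℕ)) ^ 2 + (q ^ (N - j)) ^ 2 - ((q ^ (i : ℕ)) ^ 2 + (q ^ (N - i)) ^ 2)) := by
  rw [← det_pow_odd_sub_pow_odd _ _ (q ^ N) fun i => by rw [← pow_add]; congr 1; omega,
    antisymmAlternant]
  congr 1
  ext i j
  simp only [Matrix.of_apply, antisymmPow, oddPowers]
  rw [pow_right_comm, pow_right_comm q (2 * j + 1)]

lemma antisymmAlternant_oddPowers (q : R) (n m : ℕ) :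
    antisymmAlternant (m + 1 + 2 * n - 2) (oddPowers q n) =
      alternant (oddPowers q n) 0 * macmahonProd q n m := by
  set N := m + 1 + 2 * n - 2 
  have hsingle (i : Fin n) :
      q ^ (i : ℕ) - q ^ (N - i) = q ^ (i : ℕ) * (1 - q ^ (m + 2 * i.rev + 1 : ℕ)) := by
    rw [show N - i = i + (m + 2 * i.rev + 1) by rw [Fin.val_rev]; omega]
    ring
  have hpair (i j : Fin n) (hij : j ∈ Finset.Ioi i) :
      (q ^ (j : ℕ)) ^ 2 + (q ^ (N - j)) ^ 2 - ((q ^ (i : ℕ)) ^ 2 + (q ^ (N - i)) ^ 2) =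
        ((q ^ 2) ^ (j : ℕ) - (q ^ 2) ^ (i : ℕ)) *
          (1 - q ^ (2 * (m + i.rev + j.rev + 1) : ℕ)) := by
    have hij : i < j := Finset.mem_Ioi.1 hij
    rw [show N - i = j + (m + i.rev + j.rev + 1) by rw [Fin.val_rev, Fin.val_rev]; omega,
      show N - j = i + (m + i.rev + j.rev + 1) by rw [Fin.val_rev, Fin.val_rev]; omega]
    ring
  have hvandermonde : alternant (oddPowers q n) 0 = (∏ i : Fin n, q ^ (i : ℕ)) *
      ∏ i : Fin n, ∏ j ∈ Finset.Ioi i, ((q ^ 2) ^ (j : ℕ) - (q ^ 2) ^ (i : ℕ)) := by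
    rw [oddPowers_eq_mul_pow, alternant_const_mul, alternant_zero, ← Finset.prod_pow_eq_pow_sum]
    simp only [Pi.zero_apply, zero_add]
  rw [antisymmAlternant_oddPowers_eq_mul (by omega), hvandermonde, macmahonProd_eq_prod_rev,
    mul_mul_mul_comm, Finset.prod_congr rfl fun i _ => hsingle i,
    Finset.prod_congr rfl fun i _ => Finset.prod_congr rfl (hpair i)]
  simp only [Finset.prod_mul_distrib]

theorem symmetricPPGenFun_mul_macmahonProd_zero [IsDomain R] {q : R}
    (hq : Function.Injective fun k : ℕ => q ^ k) (n m : ℕ) :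
    symmetricPPGenFun q n m * macmahonProd q n 0 = macmahonProd q n m := by
  have hne : alternant (oddPowers q n) 0 ≠ 0 := by
    rw [alternant_zero]
    refine Finset.prod_ne_zero_iff.2 fun i _ => Finset.prod_ne_zero_iff.2 fun j hj => ?_
    have hij : i < j := Finset.mem_Ioi.1 hj
    exact sub_ne_zero.2 (hq.ne (by omega))
  have hone (j : Fin n) : 1 + oddPowers q n j ≠ 0 := by
    intro h
    have hsq : q ^ ((2 * j + 1) * 2 : ℕ) = q ^ 0 := by
      rw [pow_zero, pow_mul, ← oddPowers, eq_neg_of_add_eq_zero_right h, neg_one_sq]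
    have hexp : (2 * j + 1 : ℕ) * 2 = 0 := hq hsq
    omega
  refine mul_left_cancel₀ hne ?_
  rw [← mul_assoc, symmetricPPGenFun_eq_sum_symmArrays,
    alternant_oddPowers_zero_mul_sum_symmArrays, ← littlewoodDenom_oddPowers,
    alternantSum_mul_littlewoodDenom _ _ hone, antisymmAlternant_oddPowers]

end ProductFormula

lemma prod_powerSeries_inv {K ι : Type*} [Field K] (s : Finset ι) (f : ι → PowerSeries K) :
    ∏ i ∈ s, (f i)⁻¹ = (∏ i ∈ s, f i)⁻¹ := by
  induction s using Finset.induction_on with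
  | empty => simp
  | insert i s hi ih =>
    rw [Finset.prod_insert hi, Finset.prod_insert hi, ih, PowerSeries.mul_inv_rev, mul_comm]

theorem macmahon_symmetric_pp_general (K : Type*) [Field K] (m n : ℕ) :
    ∑ P ∈ (ppBox n n m).powerset.filter
        (fun P => IsPlanePartition P ∧ IsSymmetricPP P),
      (PowerSeries.X : PowerSeries K) ^ P.card =
    (∏ i ∈ Finset.Icc 1 n,
        (1 - (PowerSeries.X : PowerSeries K) ^ (m + 2 * i - 1)) *
          (1 - (PowerSeries.X : PowerSeries K) ^ (2 * i - 1))⁻¹) *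
      ∏ i ∈ Finset.Icc 1 n, ∏ j ∈ Finset.Ioc i n,
        (1 - (PowerSeries.X : PowerSeries K) ^ (2 * (m + i + j - 1))) *
          (1 - (PowerSeries.X : PowerSeries K) ^ (2 * (i + j - 1)))⁻¹ := by
  set q : PowerSeries K := PowerSeries.X with hqX
  have hconst : PowerSeries.constantCoeff (macmahonProd q n 0) ≠ 0 := by
    simp [macmahonProd_eq_prod_fin, hqX]
  have hinj : Function.Injective fun k : ℕ => q ^ k := fun a b hab => by
    simpa [hqX] using congrArg PowerSeries.order hab
  have hquot : symmetricPPGenFun q n m = macmahonProd q n m * (macmahonProd q n 0)⁻¹ :=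
    (PowerSeries.eq_mul_inv_iff_mul_eq hconst).2 (symmetricPPGenFun_mul_macmahonProd_zero hinj n m)
  refine hquot.trans ?_
  simp only [macmahonProd, Finset.prod_mul_distrib, prod_powerSeries_inv, PowerSeries.mul_inv_rev,
    zero_add]
  ring

/-- **MacMahon's conjecture** (proved by Andrews and Macdonald): the generating function
for symmetric plane partitions contained in the box `B(n,n,m)`, each weighted by `q^|P|`,
equals `∏_{i=1}^n (1-q^{m+2i-1})/(1-q^{2i-1})
  ∏_{1≤i<j≤n} (1-q^{2(m+i+j-1)})/(1-q^{2(i+j-1)})` in `ℚ[[q]]`. -/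
theorem macmahon_symmetric_pp (m n : ℕ) (hm : 0 < m) (hn : 0 < n) :
    ∑ P ∈ (ppBox n n m).powerset.filter
        (fun P => IsPlanePartition P ∧ IsSymmetricPP P),
      (PowerSeries.X : PowerSeries ℚ) ^ P.card =
    (∏ i ∈ Finset.Icc 1 n,
        (1 - (PowerSeries.X : PowerSeries ℚ) ^ (m + 2 * i - 1)) *
          (1 - (PowerSeries.X : PowerSeries ℚ) ^ (2 * i - 1))⁻¹) *
      ∏ i ∈ Finset.Icc 1 n, ∏ j ∈ Finset.Ioc i n,
        (1 - (PowerSeries.X : PowerSeries ℚ) ^ (2 * (m + i + j - 1))) *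
          (1 - (PowerSeries.X : PowerSeries ℚ) ^ (2 * (i + j - 1)))⁻¹ :=
  macmahon_symmetric_pp_general ℚ m n
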